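/- Every integrally closed residuated lattice is torsion-free: for every n ∈ ℕ with n ≥ 1 and every element a, if aⁿ = e then a = e. -/

import Mathlib

/-- A residuated lattice: a lattice-ordered monoid with left and right residuals,
i.e. `b ≤ a\c ↔ a*b ≤ c ↔ a ≤ c/b`.  `ldiv a c` denotes `a\c` and `rdiv c b` denotes `c/b`. -/
class ResiduatedLattice (α : Type*) extends Lattice α, Monoid α where
  ldiv : α → α → α
  rdiv : α → α → α
  le_ldiv_iff : ∀ a b c : α, b ≤ ldiv a c ↔ a * b ≤ c
  le_rdiv_iff : ∀ a b c : α, a ≤ rdiv c b ↔ a * b ≤ c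

open ResiduatedLattice

/-! If `aⁿ⁺¹ = 1`, then left multiplication by `a` permutes `1, a, …, aⁿ` cyclically, so their join
`s` satisfies `a * s = s`. Integral closedness turns `a * s ≤ s` into `a ≤ 1`, and an element
strictly below `1` has all its positive powers strictly below `1`. -/

lemma mulLeftMono_of_mul_sup {M : Type*} [SemilatticeSup M] [Mul M]
    (mul_sup : ∀ a b c : M, a * (b ⊔ c) = a * b ⊔ a * c) : MulLeftMono M where
  elim a b c hbc := by
    change a * b ≤ a * c
    rw [← sup_eq_right, ← mul_sup, sup_eq_right.2 hbc]

lemma eq_one_of_le_one_of_pow_eq_one {M : Type*} [PartialOrder M] [Monoid M] [MulLeftMono M]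
    {a : M} {n : ℕ} (ha : a ≤ 1) (hn : n ≠ 0) (han : a ^ n = 1) : a = 1 :=
  ha.eq_or_lt.resolve_right fun hlt => (pow_lt_one' hlt hn).ne han

section SemilatticeSup

variable {M : Type*} [SemilatticeSup M] [Monoid M]

lemma partialSups_pow_add_one {a : M} (mul_sup : ∀ b c : M, a * (b ⊔ c) = a * b ⊔ a * c) (n : ℕ) :
    partialSups (a ^ ·) (n + 1) = 1 ⊔ a * partialSups (a ^ ·) n := by
  induction n with
  | zero => rw [partialSups_add_one, partialSups_zero, zero_add, pow_zero, pow_one, mul_one]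
  | succ n ih =>
    calc
      partialSups (a ^ ·) (n + 1 + 1) = partialSups (a ^ ·) (n + 1) ⊔ a ^ (n + 1 + 1) :=
        partialSups_add_one _ _
      _ = 1 ⊔ (a * partialSups (a ^ ·) n ⊔ a * a ^ (n + 1)) := by rw [ih, sup_assoc, pow_succ']
      _ = 1 ⊔ a * partialSups (a ^ ·) (n + 1) := by rw [← mul_sup, partialSups_add_one]

lemma mul_partialSups_pow_le_of_pow_eq_one {a : M}
    (mul_sup : ∀ b c : M, a * (b ⊔ c) = a * b ⊔ a * c) {n : ℕ} (ha : a ^ (n + 1) = 1) :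
    a * partialSups (a ^ ·) n ≤ partialSups (a ^ ·) n := by
  have one_le : 1 ≤ partialSups (a ^ ·) n := by
    simpa only [pow_zero] using le_partialSups_of_le (a ^ ·) n.zero_le
  calc
    a * partialSups (a ^ ·) n ≤ 1 ⊔ a * partialSups (a ^ ·) n := le_sup_right
    _ = partialSups (a ^ ·) (n + 1) := (partialSups_pow_add_one mul_sup n).symm
    _ = partialSups (a ^ ·) n ⊔ 1 := by rw [partialSups_add_one, ha]
    _ = partialSups (a ^ ·) n := sup_eq_left.2 one_le

theorem integrally_closed_torsion_free_general
    (mul_sup : ∀ a b c : M, a * (b ⊔ c) = a * b ⊔ a * c)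
    (le_one_of_mul_le : ∀ a b : M, a * b ≤ b → a ≤ 1)
    {n : ℕ} (hn : n ≠ 0) {a : M} (ha : a ^ n = 1) : a = 1 := by
  have := mulLeftMono_of_mul_sup mul_sup
  obtain ⟨m, rfl⟩ := Nat.exists_eq_succ_of_ne_zero hn
  have a_le_one : a ≤ 1 :=
    le_one_of_mul_le a _ (mul_partialSups_pow_le_of_pow_eq_one (mul_sup a) ha)
  exact eq_one_of_le_one_of_pow_eq_one a_le_one hn ha

end SemilatticeSup

namespace ResiduatedLattice

variable {α : Type*} [ResiduatedLattice α]

lemma gc_mul_ldiv (a : α) : GaloisConnection (a * ·) (ldiv a) :=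
  fun b c => (le_ldiv_iff a b c).symm

protected lemma mul_sup (a b c : α) : a * (b ⊔ c) = a * b ⊔ a * c :=
  (gc_mul_ldiv a).l_sup

lemma mul_le_right_iff_of_rdiv_self {b : α} (hb : rdiv b b = 1) {a : α} : a * b ≤ b ↔ a ≤ 1 := by
  rw [← le_rdiv_iff, hb]

end ResiduatedLattice

/-- Every integrally closed residuated lattice is torsion-free:
`xⁿ ≈ e ⟹ x ≈ e` for each `n ≥ 1`. -/
theorem integrally_closed_torsion_free {α : Type*} [ResiduatedLattice α]
    (hic : ∀ a : α, ldiv a a = 1 ∧ rdiv a a = 1) :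
    ∀ (n : ℕ), 1 ≤ n → ∀ a : α, a ^ n = 1 → a = 1 := fun _ hn _ =>
  integrally_closed_torsion_free_general ResiduatedLattice.mul_sup
    (fun _ b => (mul_le_right_iff_of_rdiv_self (hic b).2).1) (Nat.one_le_iff_ne_zero.1 hn)
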